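/- Let s > 0, ε > 0, let x₁, …, x_N (N ≥ 1) be points of a real normed vector space E, and let δ₁, …, δ_N be perturbations with ‖δᵢ‖ ≤ ε for all i. Let f : E → ℝ be K-Lipschitz and bounded in absolute value by M ≥ 0. Define the discrete Laplacian operator L f(x) = (1/N) Σᵢ k_s(x, xᵢ)·(f(x) − f(xᵢ)) and the perturbed operator L' f(x) = (1/N) Σᵢ k_s(x, xᵢ + δᵢ)·(f(x) − f(xᵢ + δᵢ)). Then for every x ∈ E, |L' f(x) − L f(x)| ≤ (2M·√(2/(e·s)) + K)·ε. In particular the perturbation of L f(x) is of order ε/√s plus a Lipschitz term of order ε. (Perturbation bound underlying Proposition 2.) -/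

import Mathlib

/-!
The radial profile `r ↦ exp (-r² / s)` of the Gaussian kernel has derivative of absolute value
`(2|r|/s) exp (-r² / s)`. With `u = 2r²/s` the square of this is `(2/s) · u exp (-u)`, and
`u exp (-u) ≤ 1/e` because `u ≤ exp (u - 1)`. Hence the profile is `√(2/(e s))`-Lipschitz
(`abs_gaussian_sub_le`).

Writing `k, k'` for the kernel at the original and the perturbed sample `y, y'`, each summand
changes by
`k' (f x - f y') - k (f x - f y) = (k' - k) (f x - f y') + k (f y - f y')`.
The first term is at most `√(2/(e s)) ε · 2M`, and the second at most `K ε` since `k ≤ 1`.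
Averaging over the samples preserves the bound.
-/

/-- The derivative bound for the Gaussian profile; equality holds at `r² = s / 2`. -/
lemma abs_gaussian_deriv_le (s : ℝ) (hs : 0 < s) (r : ℝ) :
    |Real.exp (-r ^ 2 / s) * (-(2 * r) / s)| ≤ Real.sqrt (2 / (Real.exp 1 * s)) := by
  apply Real.abs_le_sqrt
  have h1 : 2 * r ^ 2 / s ≤ Real.exp (2 * r ^ 2 / s - 1) := by
    linarith [Real.add_one_le_exp (2 * r ^ 2 / s - 1)]
  have h2 : Real.exp (-r ^ 2 / s) ^ 2 = Real.exp (-(2 * r ^ 2 / s)) := by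
    rw [← Real.exp_nat_mul]
    congr 1
    push_cast
    ring
  have h3 : Real.exp (-(2 * r ^ 2 / s)) * Real.exp (2 * r ^ 2 / s - 1) = (Real.exp 1)⁻¹ := by
    rw [← Real.exp_add, ← Real.exp_neg]
    congr 1
    ring
  calc (Real.exp (-r ^ 2 / s) * (-(2 * r) / s)) ^ 2
      = 2 / s * (Real.exp (-(2 * r ^ 2 / s)) * (2 * r ^ 2 / s)) := by
        rw [mul_pow, h2]
        ring
    _ ≤ 2 / s * (Real.exp (-(2 * r ^ 2 / s)) * Real.exp (2 * r ^ 2 / s - 1)) := by gcongr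
    _ = 2 / (Real.exp 1 * s) := by
        rw [h3]
        field_simp

lemma abs_gaussian_sub_le (s : ℝ) (hs : 0 < s) (a b : ℝ) :
    |Real.exp (-b ^ 2 / s) - Real.exp (-a ^ 2 / s)| ≤
      Real.sqrt (2 / (Real.exp 1 * s)) * |b - a| := by
  have hd : ∀ r ∈ (Set.univ : Set ℝ), HasDerivWithinAt (fun r : ℝ => Real.exp (-r ^ 2 / s))
      (Real.exp (-r ^ 2 / s) * (-(2 * r) / s)) Set.univ r := by
    intro r _
    have h : HasDerivAt (fun r : ℝ => Real.exp (-r ^ 2 / s)) _ r :=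
      ((hasDerivAt_pow 2 r).neg.div_const s).exp
    exact (h.congr_deriv (by simp)).hasDerivWithinAt
  have := convex_univ.norm_image_sub_le_of_norm_hasDerivWithin_le hd
    (fun r _ => abs_gaussian_deriv_le s hs r) (Set.mem_univ a) (Set.mem_univ b)
  simpa only [Real.norm_eq_abs] using this

/-- Perturbation bound for the discrete Laplacian operator built from the Gaussian kernel:
if each sample is perturbed by at most `ε`, `f` is `K`-Lipschitz and bounded by `M`, then
the perturbed operator differs from the original by at most `(2M√(2/(e·s)) + K) ε`. -/
theorem discrete_laplacian_perturbation
    {E : Type*} [NormedAddCommGroup E] [NormedSpace ℝ E]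
    (s ε : ℝ) (hs : 0 < s) (hε : 0 < ε)
    (N : ℕ) (hN : 1 ≤ N) (xs : Fin N → E) (δ : Fin N → E) (hδ : ∀ i, ‖δ i‖ ≤ ε)
    (f : E → ℝ) (K : NNReal) (hf : LipschitzWith K f)
    (M : ℝ) (hM : 0 ≤ M) (hfM : ∀ a : E, |f a| ≤ M) (x : E) :
    |(1 / (N : ℝ)) * ∑ i : Fin N,
          Real.exp (-‖x - (xs i + δ i)‖ ^ 2 / s) * (f x - f (xs i + δ i)) -
        (1 / (N : ℝ)) * ∑ i : Fin N,
          Real.exp (-‖x - xs i‖ ^ 2 / s) * (f x - f (xs i))| ≤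
      (2 * M * Real.sqrt (2 / (Real.exp 1 * s)) + (K : ℝ)) * ε := by
  set C := Real.sqrt (2 / (Real.exp 1 * s)) with hC
  have hC0 : 0 ≤ C := Real.sqrt_nonneg _
  have hterm : ∀ i, |Real.exp (-‖x - (xs i + δ i)‖ ^ 2 / s) * (f x - f (xs i + δ i)) -
      Real.exp (-‖x - xs i‖ ^ 2 / s) * (f x - f (xs i))| ≤ (2 * M * C + (K : ℝ)) * ε := by
    intro i
    have hk : |Real.exp (-‖x - (xs i + δ i)‖ ^ 2 / s) - Real.exp (-‖x - xs i‖ ^ 2 / s)|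
        ≤ C * ε := by
      refine (abs_gaussian_sub_le s hs _ _).trans (mul_le_mul_of_nonneg_left ?_ hC0)
      refine (abs_norm_sub_norm_le _ _).trans ?_
      have : x - (xs i + δ i) - (x - xs i) = -δ i := by abel
      rw [this, norm_neg]
      exact hδ i
    have hf1 : |f x - f (xs i + δ i)| ≤ 2 * M := by
      have := abs_sub (f x) (f (xs i + δ i))
      linarith [hfM x, hfM (xs i + δ i)]
    have hf2 : |f (xs i) - f (xs i + δ i)| ≤ K * ε := by
      have h := hf.dist_le_mul (xs i) (xs i + δ i)
      rw [Real.dist_eq, dist_self_add_right] at h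
      exact h.trans (mul_le_mul_of_nonneg_left (hδ i) K.2)
    have hk1 : Real.exp (-‖x - xs i‖ ^ 2 / s) ≤ 1 := by
      rw [Real.exp_le_one_iff, neg_div]
      exact neg_nonpos.2 (by positivity)
    have hk0 := (Real.exp_pos (-‖x - xs i‖ ^ 2 / s)).le
    generalize Real.exp (-‖x - (xs i + δ i)‖ ^ 2 / s) = k' at *
    generalize Real.exp (-‖x - xs i‖ ^ 2 / s) = k at *
    calc |k' * (f x - f (xs i + δ i)) - k * (f x - f (xs i))|
        = |(k' - k) * (f x - f (xs i + δ i)) + k * (f (xs i) - f (xs i + δ i))| := by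
          congr 1
          ring
      _ ≤ |k' - k| * |f x - f (xs i + δ i)| + k * |f (xs i) - f (xs i + δ i)| := by
          refine (abs_add_le _ _).trans_eq ?_
          rw [abs_mul, abs_mul, abs_of_nonneg hk0]
      _ ≤ C * ε * (2 * M) + 1 * (K * ε) := by gcongr
      _ = (2 * M * C + (K : ℝ)) * ε := by ring
  have hN0 : (0 : ℝ) < N := by exact_mod_cast hN
  rw [← mul_sub, ← Finset.sum_sub_distrib, abs_mul, abs_of_pos (one_div_pos.2 hN0),
    one_div_mul_eq_div, div_le_iff₀ hN0]
  refine (Finset.abs_sum_le_sum_abs _ _).trans ((Finset.sum_le_sum fun i _ => hterm i).trans_eq ?_)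
  simp [mul_comm]
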